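/- Let K be a field, fix s = (s_1,…,s_m) ∈ ℕ^m and δ ∈ ℤ_{>0}, with the associated α_j, β_j, m̄, expansion-compression matrix E and expanded shift s̄ as in the column partial linearization. Let K ∈ K[x]^{k×m} satisfy rdeg_{−s}(K) ≥ 0 entrywise, and let K̄ ∈ K[x]^{k×m̄} be the column partial linearization of K. Then rdeg_{−s̄}(K̄) = rdeg_{−s}(K); moreover, if K is in −s-weak Popov form, then K̄ is in −s̄-weak Popov form. -/

import Mathlib

open Polynomial Matrix

/-- The degree of a polynomial, viewed in `ℤ ∪ {-∞}`. -/
noncomputable def degZ {K : Type*} [Field K] (p : K[X]) : WithBot ℤ :=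
  p.degree.map fun a : ℕ => (a : ℤ)

/-- The `s`-row degree of a (row) vector of polynomials. -/
noncomputable def rdegRow {K : Type*} [Field K] {ν : Type*} [Fintype ν]
    (s : ν → ℤ) (v : ν → K[X]) : WithBot ℤ :=
  Finset.univ.sup fun j => degZ (v j) + (s j : WithBot ℤ)

/-- The `s`-row degree of a polynomial matrix. -/
noncomputable def rdeg {K : Type*} [Field K] {ι ν : Type*} [Fintype ν]
    (s : ν → ℤ) (P : Matrix ι ν K[X]) : ι → WithBot ℤ :=
  fun i => rdegRow s (P i)

/-- The `t`-column degree of a polynomial matrix. -/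
noncomputable def cdeg {K : Type*} [Field K] {ι ν : Type*} [Fintype ι]
    (t : ι → ℤ) (P : Matrix ι ν K[X]) : ν → WithBot ℤ :=
  fun j => Finset.univ.sup fun i => degZ (P i j) + (t i : WithBot ℤ)

/-- Coefficient of integer degree `d` of a polynomial (0 if `d < 0`). -/
noncomputable def coeffZ {K : Type*} [Field K] (p : K[X]) (d : ℤ) : K :=
  if 0 ≤ d then p.coeff d.toNat else 0

/-- The `s`-leading matrix of a polynomial matrix. -/
noncomputable def lm {K : Type*} [Field K] {ι ν : Type*} [Fintype ν]
    (s : ν → ℤ) (P : Matrix ι ν K[X]) : Matrix ι ν K :=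
  Matrix.of fun i j =>
    (rdeg s P i).recBotCoe 0 fun t => coeffZ (P i j) (t - s j)

/-- `P` is in `s`-reduced form: its `s`-leading matrix has full row rank,
i.e. its rows are linearly independent over `K`. -/
def IsReducedForm {K : Type*} [Field K] {ι ν : Type*} [Fintype ν]
    (s : ν → ℤ) (P : Matrix ι ν K[X]) : Prop :=
  LinearIndependent K fun i => lm s P i

open Classical in
/-- The `s`-pivot index of a row vector: the largest column index where the
`s`-row degree is attained (with a nonzero entry); `⊥` for the zero row. -/
noncomputable def piv {K : Type*} [Field K] {ν : Type*} [Fintype ν] [LinearOrder ν]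
    (s : ν → ℤ) (v : ν → K[X]) : WithBot ν :=
  (Finset.univ.filter fun j => v j ≠ 0 ∧ degZ (v j) + (s j : WithBot ℤ) = rdegRow s v).max

/-- The `s`-pivot degree of a row vector (junk value `0` for the zero row). -/
noncomputable def pivDeg {K : Type*} [Field K] {ν : Type*} [Fintype ν] [LinearOrder ν]
    (s : ν → ℤ) (v : ν → K[X]) : ℕ :=
  ((piv s v).map fun j => (v j).natDegree).unbotD 0

/-- `P` is in `s`-weak Popov form: no zero row and strictly increasing `s`-pivot indices. -/
def IsWeakPopov {K : Type*} [Field K] {ι ν : Type*} [Fintype ν] [LinearOrder ν] [Preorder ι]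
    (s : ν → ℤ) (P : Matrix ι ν K[X]) : Prop :=
  (∀ i, piv s (P i) ≠ ⊥) ∧ StrictMono fun i => piv s (P i)

/-- `P` is in `s`-unordered weak Popov form: no zero row and pairwise distinct
`s`-pivot indices. -/
def IsUWeakPopov {K : Type*} [Field K] {ι ν : Type*} [Fintype ν] [LinearOrder ν]
    (s : ν → ℤ) (P : Matrix ι ν K[X]) : Prop :=
  (∀ i, piv s (P i) ≠ ⊥) ∧ Function.Injective fun i => piv s (P i)

/-- `P` is in `s`-Popov form: `s`-weak Popov, monic pivots, and each pivot entry
has degree strictly larger than the other entries of its column. -/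
def IsPopov {K : Type*} [Field K] {ι ν : Type*} [Fintype ν] [LinearOrder ν] [Preorder ι]
    (s : ν → ℤ) (P : Matrix ι ν K[X]) : Prop :=
  IsWeakPopov s P ∧
    ∀ i (j : ν), piv s (P i) = (j : WithBot ν) →
      (P i j).Monic ∧ ∀ i', i' ≠ i → (P i' j).degree < (P i j).degree

/-- The row space of a polynomial matrix. -/
noncomputable def rowSpace {K : Type*} [Field K] {ι ν : Type*} (P : Matrix ι ν K[X]) :
    Submodule K[X] (ν → K[X]) :=
  Submodule.span K[X] (Set.range fun i => P i)

/-- The rows of `B` form a basis of the module `M`. -/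
def IsBasisOf {K : Type*} [Field K] {ι ν : Type*} (B : Matrix ι ν K[X])
    (M : Submodule K[X] (ν → K[X])) : Prop :=
  LinearIndependent K[X] (fun i => B i) ∧
    Submodule.span K[X] (Set.range fun i => B i) = M

/-- The left kernel of a polynomial matrix. -/
noncomputable def leftKernel {K : Type*} [Field K] {ι ν : Type*} [Fintype ι]
    (F : Matrix ι ν K[X]) : Submodule K[X] (ι → K[X]) :=
  LinearMap.ker F.vecMulLinear

/-! ### Column partial linearization (Definition 5.3) -/

/-- Number of parts `α_j = ⌈s_j/δ⌉` (with `α_j = 1` when `s_j = 0`). -/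
def cplα (δ : ℕ) {m : ℕ} (s : Fin m → ℕ) (j : Fin m) : ℕ :=
  max 1 ((s j + δ - 1) / δ)

/-- Remainder `β_j` so that `s_j = (α_j − 1)δ + β_j`. -/
def cplβ (δ : ℕ) {m : ℕ} (s : Fin m → ℕ) (j : Fin m) : ℕ :=
  s j - (cplα δ s j - 1) * δ

/-- Index set of the expanded columns: pairs `(j, i)` with `0 ≤ i < α_j`,
ordered lexicographically (this corresponds to `α_1 + ⋯ + α_{j-1} + i`). -/
abbrev CplIdx (δ : ℕ) {m : ℕ} (s : Fin m → ℕ) := Lex ((j : Fin m) × Fin (cplα δ s j))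

/-- The expansion-compression matrix `E`: block diagonal with `j`-th block the
column `(1, x^δ, …, x^{(α_j−1)δ})ᵀ`. -/
noncomputable def cplE (K : Type*) [Field K] (δ : ℕ) {m : ℕ} (s : Fin m → ℕ) :
    Matrix (CplIdx δ s) (Fin m) K[X] :=
  Matrix.of fun c j =>
    if (ofLex c).1 = j then (Polynomial.X : K[X]) ^ (((ofLex c).2 : ℕ) * δ) else 0

/-- The expanded shift `s̄`: within block `j`, `δ` everywhere except `β_j` at
the last position. -/
def cplShift (δ : ℕ) {m : ℕ} (s : Fin m → ℕ) (c : CplIdx δ s) : ℕ :=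
  if ((ofLex c).2 : ℕ) = cplα δ s (ofLex c).1 - 1 then cplβ δ s (ofLex c).1 else δ

/-- The block diagonal matrix `Z = diag(Z_1,…,Z_m)` with
`Z_j ∈ K[x]^{(α_j−1)×α_j}` having `x^δ` on the diagonal and `−1` on the
superdiagonal. -/
noncomputable def cplZ (K : Type*) [Field K] (δ : ℕ) {m : ℕ} (s : Fin m → ℕ) :
    Matrix (Lex ((j : Fin m) × Fin (cplα δ s j - 1))) (CplIdx δ s) K[X] :=
  Matrix.of fun r c =>
    if (ofLex r).1 = (ofLex c).1 then
      (if ((ofLex c).2 : ℕ) = ((ofLex r).2 : ℕ) then (Polynomial.X : K[X]) ^ δ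
       else if ((ofLex c).2 : ℕ) = ((ofLex r).2 : ℕ) + 1 then -1 else 0)
    else 0

/-- The last index of block `j`. -/
def cplLast (δ : ℕ) {m : ℕ} (s : Fin m → ℕ) (j : Fin m) : CplIdx δ s :=
  toLex ⟨j, ⟨cplα δ s j - 1, by
    have : 1 ≤ cplα δ s j := le_max_left _ _
    omega⟩⟩

theorem cplLast_strictMono (δ : ℕ) {m : ℕ} (s : Fin m → ℕ) : StrictMono (cplLast δ s) := by
  intro a b h
  exact Sigma.Lex.lt_def.2 (Or.inl h)

theorem cpl_mul_le (δ : ℕ) (hδ : 0 < δ) {m : ℕ} (s : Fin m → ℕ) (j : Fin m) :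
    (cplα δ s j - 1) * δ ≤ s j := by
  unfold cplα
  have h := Nat.div_mul_le_self (s j + δ - 1) δ
  rcases le_total ((s j + δ - 1) / δ) 1 with h1 | h1
  · rw [max_eq_left h1]; simp
  · rw [max_eq_right h1, Nat.sub_mul]; omega

theorem degZ_eq {K : Type*} [Field K] {p : K[X]} (hp : p ≠ 0) :
    degZ p = ((p.natDegree : ℤ) : WithBot ℤ) := by
  unfold degZ
  rw [Polynomial.degree_eq_natDegree hp]; rfl

theorem degZ_zero' {K : Type*} [Field K] : degZ (0 : K[X]) = ⊥ := by
  unfold degZ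
  rw [Polynomial.degree_zero]; rfl

theorem degZ_neg {K : Type*} [Field K] {p : K[X]} {n : ℕ} (h : p.degree < (n : WithBot ℕ))
    {t : ℕ} (ht : n ≤ t) :
    degZ p + ((-(t : ℤ) : ℤ) : WithBot ℤ) < ((0 : ℤ) : WithBot ℤ) := by
  by_cases hp : p = 0
  · rw [hp, degZ_zero', WithBot.bot_add]; exact WithBot.bot_lt_coe _
  · rw [degZ_eq hp, ← WithBot.coe_add, WithBot.coe_lt_coe]
    rw [Polynomial.degree_eq_natDegree hp] at h
    have : p.natDegree < n := by exact_mod_cast h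
    omega

/-- Relation between the shifted degree of an entry and that of the last part. -/
theorem cpl_entry {K : Type*} [Field K] {m k : ℕ}
    (s : Fin m → ℕ) (δ : ℕ) (hδ : 0 < δ)
    (M : Matrix (Fin k) (Fin m) K[X])
    (Mb : Matrix (Fin k) (CplIdx δ s) K[X])
    (hME : M = Mb * cplE K δ s)
    (hMdeg : ∀ (r : Fin k) (c : CplIdx δ s),
      ¬(((ofLex c).2 : ℕ) = cplα δ s (ofLex c).1 - 1) →
      (Mb r c).degree < (δ : WithBot ℕ)) (r : Fin k) (j : Fin m) :
    degZ (Mb r (cplLast δ s j)) + ((-(cplShift δ s (cplLast δ s j) : ℤ) : ℤ) : WithBot ℤ)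
      = degZ (M r j) + ((-(s j : ℤ) : ℤ) : WithBot ℤ) ∨
    (degZ (Mb r (cplLast δ s j)) + ((-(cplShift δ s (cplLast δ s j) : ℤ) : ℤ) : WithBot ℤ) < ((0 : ℤ) : WithBot ℤ) ∧
      degZ (M r j) + ((-(s j : ℤ) : ℤ) : WithBot ℤ) < ((0 : ℤ) : WithBot ℤ)) := by
  have hle := cpl_mul_le δ hδ s j
  have hsh : cplShift δ s (cplLast δ s j) = s j - (cplα δ s j - 1) * δ := by
    simp [cplShift, cplLast, cplβ]
  set N := (cplα δ s j - 1) * δ with hN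
  have hdec : ∃ low : K[X], low.degree < (N : WithBot ℕ) ∧
      M r j = low + Mb r (cplLast δ s j) * X ^ N := by
    refine ⟨∑ c ∈ Finset.univ.erase (cplLast δ s j), Mb r c * cplE K δ s c j, ?_, ?_⟩
    · refine (Polynomial.degree_sum_le _ _).trans_lt ?_
      rw [Finset.sup_lt_iff (WithBot.bot_lt_coe _)]
      rintro c hc
      have hne := Finset.ne_of_mem_erase hc
      by_cases hcj : (ofLex c).1 = j
      · have hnl : ¬(((ofLex c).2 : ℕ) = cplα δ s (ofLex c).1 - 1) := by
          intro h
          apply hne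
          subst hcj
          apply ofLex.injective
          exact Sigma.ext rfl (heq_of_eq (Fin.ext h))
        have hd := hMdeg r c hnl
        by_cases h0 : Mb r c = 0
        · rw [h0, zero_mul, Polynomial.degree_zero]; exact WithBot.bot_lt_coe _
        · have hE : cplE K δ s c j = X ^ (((ofLex c).2 : ℕ) * δ) := by
            simp [cplE, hcj]
          rw [hE, Polynomial.degree_mul, Polynomial.degree_X_pow]
          rw [Polynomial.degree_eq_natDegree h0] at hd ⊢
          have hd' : (Mb r c).natDegree < δ := by exact_mod_cast hd
          have hlt := (ofLex c).2.isLt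
          have hα : cplα δ s (ofLex c).1 = cplα δ s j := congrArg _ hcj
          have h3 : ((ofLex c).2 : ℕ) + 1 ≤ cplα δ s j - 1 := by omega
          have h4 := Nat.mul_le_mul_right δ h3
          rw [Nat.add_mul, one_mul] at h4
          have : (Mb r c).natDegree + ((ofLex c).2 : ℕ) * δ < N := by omega
          exact_mod_cast this
      · have hE : cplE K δ s c j = 0 := by simp [cplE, hcj]
        rw [hE, mul_zero, Polynomial.degree_zero]; exact WithBot.bot_lt_coe _
    · have hE : cplE K δ s (cplLast δ s j) j = X ^ N := by simp [cplE, cplLast, hN]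
      rw [← hE, Finset.sum_erase_add _ _ (Finset.mem_univ _), hME, Matrix.mul_apply]
  obtain ⟨low, hlow, hv⟩ := hdec
  by_cases hw : Mb r (cplLast δ s j) = 0
  · right
    constructor
    · rw [hw, degZ_zero', WithBot.bot_add]; exact WithBot.bot_lt_coe _
    · rw [hv, hw, zero_mul, add_zero]
      exact degZ_neg hlow hle
  · left
    have hdm : (Mb r (cplLast δ s j) * X ^ N).degree
        = (((Mb r (cplLast δ s j)).natDegree + N : ℕ) : WithBot ℕ) := by
      rw [Polynomial.degree_mul, Polynomial.degree_X_pow, Polynomial.degree_eq_natDegree hw]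
      rfl
    have hdv : (M r j).degree = (((Mb r (cplLast δ s j)).natDegree + N : ℕ) : WithBot ℕ) := by
      rw [hv, Polynomial.degree_add_eq_right_of_degree_lt, hdm]
      rw [hdm]
      refine hlow.trans_le ?_
      exact_mod_cast Nat.le_add_left _ _
    have hvne : M r j ≠ 0 := by
      intro h
      rw [h, Polynomial.degree_zero] at hdv
      exact WithBot.bot_ne_coe hdv
    rw [degZ_eq hw, degZ_eq hvne, Polynomial.natDegree_eq_of_degree_eq_some hdv, hsh,
      ← WithBot.coe_add, ← WithBot.coe_add, WithBot.coe_inj]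
    push_cast [hle]
    ring

theorem piv_eq_coe_iff {K : Type*} [Field K] {ν : Type*} [Fintype ν] [LinearOrder ν]
    (s : ν → ℤ) (v : ν → K[X]) (j : ν) :
    piv s v = (j : WithBot ν) ↔
      (v j ≠ 0 ∧ degZ (v j) + (s j : WithBot ℤ) = rdegRow s v) ∧
      ∀ i, (v i ≠ 0 ∧ degZ (v i) + (s i : WithBot ℤ) = rdegRow s v) → i ≤ j := by
  classical
  unfold piv
  constructor
  · intro h
    refine ⟨by simpa using Finset.mem_of_max h, fun i hi => ?_⟩
    exact Finset.le_max_of_eq (by simpa using hi) h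
  · rintro ⟨h1, h2⟩
    apply le_antisymm
    · refine Finset.max_le ?_
      intro a ha
      exact WithBot.coe_le_coe.2 (h2 a (by simpa using ha))
    · exact Finset.le_max (by simpa using h1)

/-- Lemma 5.4: the column partial linearization preserves
shifted row degrees (`rdeg_{−s̄}(K̄) = rdeg_{−s}(K)` when `rdeg_{−s}(K) ≥ 0`),
and maps `(−s)`-weak Popov forms to `(−s̄)`-weak Popov forms. -/
theorem cpl_rdeg_and_weakPopov {K : Type*} [Field K] {m k : ℕ}
    (s : Fin m → ℕ) (δ : ℕ) (hδ : 0 < δ)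
    (M : Matrix (Fin k) (Fin m) K[X])
    (hM : ∀ i, ((0 : ℤ) : WithBot ℤ) ≤ rdeg (fun j => -(s j : ℤ)) M i)
    (Mb : Matrix (Fin k) (CplIdx δ s) K[X])
    (hME : M = Mb * cplE K δ s)
    (hMdeg : ∀ (r : Fin k) (c : CplIdx δ s),
      ¬(((ofLex c).2 : ℕ) = cplα δ s (ofLex c).1 - 1) →
      (Mb r c).degree < (δ : WithBot ℕ)) :
    (∀ i, rdeg (fun c => -(cplShift δ s c : ℤ)) Mb i = rdeg (fun j => -(s j : ℤ)) M i) ∧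
    (IsWeakPopov (fun j => -(s j : ℤ)) M →
      IsWeakPopov (fun c => -(cplShift δ s c : ℤ)) Mb) := by
  have hent := cpl_entry s δ hδ M Mb hME hMdeg
  have hnon : ∀ (r : Fin k) (c : CplIdx δ s), c ≠ cplLast δ s (ofLex c).1 →
      degZ (Mb r c) + ((-(cplShift δ s c : ℤ) : ℤ) : WithBot ℤ) < ((0 : ℤ) : WithBot ℤ) := by
    intro r c hc
    have hnl : ¬(((ofLex c).2 : ℕ) = cplα δ s (ofLex c).1 - 1) := by
      intro h
      apply hc
      apply ofLex.injective
      exact Sigma.ext rfl (heq_of_eq (Fin.ext h))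
    apply degZ_neg (hMdeg r c hnl)
    simp [cplShift, hnl]
  have hR : ∀ i, rdeg (fun c => -(cplShift δ s c : ℤ)) Mb i
      = rdeg (fun j => -(s j : ℤ)) M i := by
    intro i
    have h0 := hM i
    unfold rdeg rdegRow at h0 ⊢
    obtain ⟨j0, -, hj0⟩ := (Finset.le_sup_iff (WithBot.bot_lt_coe _)).1 h0
    apply le_antisymm
    · refine Finset.sup_le fun c _ => ?_
      by_cases hc : c = cplLast δ s (ofLex c).1
      · rw [hc]
        rcases hent i (ofLex c).1 with h | h
        · rw [h]
          exact Finset.le_sup (f := fun j => degZ (M i j) + ((-(s j : ℤ) : ℤ) : WithBot ℤ))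
            (Finset.mem_univ _)
        · exact h.1.le.trans h0
      · exact (hnon i c hc).le.trans h0
    · have key : ∀ j, ((0 : ℤ) : WithBot ℤ) ≤ degZ (M i j) + ((-(s j : ℤ) : ℤ) : WithBot ℤ) →
          degZ (M i j) + ((-(s j : ℤ) : ℤ) : WithBot ℤ) ≤
          Finset.univ.sup fun c => degZ (Mb i c) + ((-(cplShift δ s c : ℤ) : ℤ) : WithBot ℤ) := by
        intro j hj
        rcases hent i j with h | h
        · rw [← h]
          exact Finset.le_sup
            (f := fun c => degZ (Mb i c) + ((-(cplShift δ s c : ℤ) : ℤ) : WithBot ℤ))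
            (Finset.mem_univ _)
        · exact absurd h.2 (not_lt.2 hj)
      refine Finset.sup_le fun j _ => ?_
      rcases le_total ((0 : ℤ) : WithBot ℤ)
        (degZ (M i j) + ((-(s j : ℤ) : ℤ) : WithBot ℤ)) with h | h
      · exact key j h
      · exact h.trans (hj0.trans (key j0 hj0))
  refine ⟨hR, ?_⟩
  have hP : ∀ i (j : Fin m), piv (fun j => -(s j : ℤ)) (M i) = (j : WithBot (Fin m)) →
      piv (fun c => -(cplShift δ s c : ℤ)) (Mb i)
        = ((cplLast δ s j : CplIdx δ s) : WithBot (CplIdx δ s)) := by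
    intro i j h
    rw [piv_eq_coe_iff] at h ⊢
    obtain ⟨⟨-, h2⟩, h3⟩ := h
    have h0 := hM i
    have hRi := hR i
    unfold rdeg at h0 hRi
    rw [hRi]
    have hbot : ∀ (p : K[X]) (t : ℤ),
        ((0 : ℤ) : WithBot ℤ) ≤ degZ p + (t : WithBot ℤ) → p ≠ 0 := by
      rintro p t h rfl
      rw [degZ_zero', WithBot.bot_add] at h
      exact absurd (WithBot.bot_lt_coe (0 : ℤ)) (not_lt.2 h)
    have h5 : degZ (Mb i (cplLast δ s j))
        + ((-(cplShift δ s (cplLast δ s j) : ℤ) : ℤ) : WithBot ℤ)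
        = rdegRow (fun j => -(s j : ℤ)) (M i) := by
      rcases hent i j with h | h
      · rw [h, h2]
      · exact absurd h.2 (not_lt.2 (h0.trans h2.symm.le))
    refine ⟨⟨hbot _ _ (h0.trans h5.symm.le), h5⟩, ?_⟩
    rintro c ⟨-, hc⟩
    by_cases hcl : c = cplLast δ s (ofLex c).1
    · rw [hcl]
      apply (cplLast_strictMono δ s).monotone
      rw [hcl] at hc
      apply h3
      rcases hent i (ofLex c).1 with h | h
      · have h6 := h.symm.trans hc
        exact ⟨hbot _ _ (h0.trans h6.symm.le), h6⟩
      · exact absurd h.1 (not_lt.2 (h0.trans hc.symm.le))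
    · exact absurd (hnon i c hcl) (not_lt.2 (h0.trans hc.symm.le))
  rintro ⟨hn, hmono⟩
  constructor
  · intro i
    obtain ⟨j, hj⟩ := WithBot.ne_bot_iff_exists.1 (hn i)
    rw [hP i j hj.symm]
    exact WithBot.coe_ne_bot
  · intro a b hab
    obtain ⟨ja, hja⟩ := WithBot.ne_bot_iff_exists.1 (hn a)
    obtain ⟨jb, hjb⟩ := WithBot.ne_bot_iff_exists.1 (hn b)
    have := hmono hab
    simp only [← hja, ← hjb, WithBot.coe_lt_coe] at this
    simp only [hP a ja hja.symm, hP b jb hjb.symm, WithBot.coe_lt_coe]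
    exact cplLast_strictMono δ s this
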